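/- ∑_{n=0}^∞ ((9n+7)/((n+1)(3n+1))) · ((5/3)_n/((3/2)_n)) · (1/4)^n = 6·(π√3/12 + (3/4)·log 3), where (x)_n is the rising factorial. -/

import Mathlib

/-!
The series is a Wilf–Zeilberger acceleration of `∑ 3 / ((k + 1) (3 k + 1))`. With
`F n k = (5/3)_n (k+n)! / ((k+2n+1)! (k+n+1/3))` and its rational multiple
`G n k = F n k * ((n+5/3) / (k+2n+2) + (k+n+1/3) / (n+1))` one has
`F (n+1) k - F n k = G n (k+1) - G n k` (`wzF_sub`), while `2 * G n 0` is the `n`-th term of the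
series (`term_eq`). Since `G n k → 0` as `k → ∞`, summing over `k` gives
`∑ₖ F n k - ∑ₖ F (n+1) k = G n 0`. The bound `F n k ≤ (2/3)^n F 0 k` (`wzF_le`) makes the row sums
tend to zero, so telescoping in `n` yields `∑ₙ G n 0 = ∑ₖ F 0 k = ∑ₖ 3 / ((k + 1) (3 k + 1))`.

That last sum is `(9/2) ∫₀¹ (1 + t) / (1 + t + t²) dt` (`hasSum_row_zero`): a geometric sum under
the integral sign, with an explicit remainder of size `O(1/K)`. The integral is elementary, being a
combination of a logarithm and an arctangent (`integral_eq`).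
-/

/-- The rising factorial (Pochhammer symbol) `(x)_n = x(x+1)⋯(x+n-1)` for real `x`. -/
def riseFac (x : ℝ) (n : ℕ) : ℝ := ∏ i ∈ Finset.range n, (x + (i : ℝ))

open Filter Topology

/-- The Wilf–Zeilberger kernel `(5/3)_n (k+n)! / ((k+2n+1)! (k+n+1/3))`. -/
noncomputable def wzF (n k : ℕ) : ℝ :=
  riseFac (5 / 3) n * ((k + n).factorial : ℝ) /
    (((k + 2 * n + 1).factorial : ℝ) * ((k : ℝ) + n + 1 / 3))

/-- The Wilf–Zeilberger mate of `wzF`. -/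
noncomputable def wzG (n k : ℕ) : ℝ :=
  wzF n k * (((n : ℝ) + 5 / 3) / ((k : ℝ) + 2 * n + 2) + ((k : ℝ) + n + 1 / 3) / ((n : ℝ) + 1))

lemma riseFac_succ (x : ℝ) (n : ℕ) : riseFac x (n + 1) = riseFac x n * (x + n) := by
  simp [riseFac, Finset.prod_range_succ]

lemma riseFac_pos {x : ℝ} (hx : 0 < x) (n : ℕ) : 0 < riseFac x n :=
  Finset.prod_pos fun i _ => by positivity

lemma wzF_pos (n k : ℕ) : 0 < wzF n k := by
  have := riseFac_pos (x := 5 / 3) (by norm_num) n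
  unfold wzF
  positivity

lemma wzF_succ_left (n k : ℕ) : wzF (n + 1) k = wzF n k *
    (((n : ℝ) + 5 / 3) * ((k : ℝ) + n + 1) * ((k : ℝ) + n + 1 / 3) /
      (((k : ℝ) + 2 * n + 2) * ((k : ℝ) + 2 * n + 3) * ((k : ℝ) + n + 4 / 3))) := by
  unfold wzF
  rw [riseFac_succ, show k + (n + 1) = (k + n) + 1 by ring,
    show k + 2 * (n + 1) + 1 = (k + 2 * n + 1) + 1 + 1 by ring,
    Nat.factorial_succ, Nat.factorial_succ (k + 2 * n + 1 + 1), Nat.factorial_succ (k + 2 * n + 1)]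
  have h := Nat.factorial_pos (k + 2 * n + 1)
  push_cast
  rw [div_mul_div_comm, div_eq_div_iff (by positivity) (by positivity)]
  ring

lemma wzF_succ_right (n k : ℕ) : wzF n (k + 1) = wzF n k *
    (((k : ℝ) + n + 1) * ((k : ℝ) + n + 1 / 3) /
      (((k : ℝ) + 2 * n + 2) * ((k : ℝ) + n + 4 / 3))) := by
  unfold wzF
  rw [show k + 1 + n = (k + n) + 1 by ring, show k + 1 + 2 * n + 1 = (k + 2 * n + 1) + 1 by ring,
    Nat.factorial_succ, Nat.factorial_succ (k + 2 * n + 1)]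
  have h := Nat.factorial_pos (k + 2 * n + 1)
  push_cast
  rw [div_mul_div_comm, div_eq_div_iff (by positivity) (by positivity)]
  ring

/-- The Wilf–Zeilberger equation. -/
lemma wzF_sub (n k : ℕ) : wzF (n + 1) k - wzF n k = wzG n (k + 1) - wzG n k := by
  unfold wzG
  rw [wzF_succ_left, wzF_succ_right]
  push_cast
  have h1 : (k : ℝ) + 2 * n + 2 ≠ 0 := by positivity
  have h2 : (k : ℝ) + 2 * n + 3 ≠ 0 := by positivity
  have h3 : (k : ℝ) + n + 4 / 3 ≠ 0 := by positivity
  have h4 : (n : ℝ) + 1 ≠ 0 := by positivity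
  rw [show (k : ℝ) + 1 + 2 * n + 2 = k + 2 * n + 3 by ring,
    show (k : ℝ) + 1 + n + 1 / 3 = k + n + 4 / 3 by ring]
  generalize wzF n k = f
  field_simp
  ring

lemma wzF_zero (k : ℕ) : wzF 0 k = 3 / (((k : ℝ) + 1) * (3 * k + 1)) := by
  unfold wzF
  have h := Nat.factorial_pos k
  simp only [riseFac, Nat.factorial_succ, Finset.range_zero, Finset.prod_empty, Nat.add_zero,
    Nat.mul_zero]
  push_cast
  rw [div_eq_div_iff (by positivity) (by positivity)]
  ring

/-- Geometric decay in `n`: the ratio `wzF (n+1) k / wzF n k` is at most `2/3`, since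
`n + 5/3 ≤ (2/3) (2n + 3)`. -/
lemma wzF_le (n k : ℕ) : wzF n k ≤ (2 / 3) ^ n * wzF 0 k := by
  induction n with
  | zero => simp
  | succ n ih =>
    have h : ((n : ℝ) + 5 / 3) * ((k : ℝ) + n + 1) * ((k : ℝ) + n + 1 / 3) /
      (((k : ℝ) + 2 * n + 2) * ((k : ℝ) + 2 * n + 3) * ((k : ℝ) + n + 4 / 3)) ≤ 2 / 3 := by
      have hk : (0 : ℝ) ≤ k := k.cast_nonneg
      have hn : (0 : ℝ) ≤ n := n.cast_nonneg
      rw [div_le_iff₀ (by positivity)]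
      calc ((n : ℝ) + 5 / 3) * ((k : ℝ) + n + 1) * ((k : ℝ) + n + 1 / 3)
          ≤ (2 / 3 * ((k : ℝ) + 2 * n + 3)) * ((k : ℝ) + 2 * n + 2) * ((k : ℝ) + n + 4 / 3) := by
            gcongr <;> linarith
        _ = _ := by ring
    rw [wzF_succ_left]
    calc _ ≤ ((2 / 3) ^ n * wzF 0 k) * (2 / 3) := by
          gcongr
          have := wzF_pos 0 k
          positivity
      _ = _ := by ring

lemma tendsto_wzG (n : ℕ) : Tendsto (wzG n) atTop (𝓝 0) := by
  have hpos : ∀ k, 0 ≤ wzG n k := fun k => by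
    have := wzF_pos n k
    unfold wzG
    positivity
  have hle : ∀ k, wzG n k ≤ (9 * (n + 2) : ℝ) * (1 / ((k : ℝ) + 1)) := fun k => by
    have hk : (0 : ℝ) ≤ k := k.cast_nonneg
    have hn : (0 : ℝ) ≤ n := n.cast_nonneg
    have h0 : wzF n k ≤ 3 / (((k : ℝ) + 1) * (3 * k + 1)) := by
      rw [← wzF_zero]
      refine (wzF_le n k).trans (mul_le_of_le_one_left (wzF_pos 0 k).le ?_)
      exact pow_le_one₀ (by norm_num) (by norm_num)
    have h1 : ((n : ℝ) + 5 / 3) / ((k : ℝ) + 2 * n + 2) ≤ 1 := by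
      rw [div_le_one (by positivity)]; linarith
    have h2 : ((k : ℝ) + n + 1 / 3) / ((n : ℝ) + 1) ≤ k + n + 1 / 3 :=
      div_le_self (by positivity) (by linarith)
    calc wzG n k ≤ 3 / (((k : ℝ) + 1) * (3 * k + 1)) * (1 + (k + n + 1 / 3)) := by
          unfold wzG; gcongr
      _ ≤ 3 / (((k : ℝ) + 1) * (3 * k + 1)) * (3 * (n + 2) * (3 * k + 1)) := by
          gcongr; nlinarith [mul_nonneg hn hk]
      _ = _ := by field_simp; ring
  refine squeeze_zero hpos hle ?_
  simpa using tendsto_one_div_add_atTop_nhds_zero_nat.const_mul (9 * (n + 2) : ℝ)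

/-- The factor that turns `(3/2)_n 4^n` into the factorials occurring in `wzF n 0`. -/
lemma riseFac_three_halves (n : ℕ) :
    riseFac (3 / 2) n * 4 ^ n * (n.factorial : ℝ) = ((2 * n + 1).factorial : ℝ) := by
  induction n with
  | zero => simp [riseFac]
  | succ n ih =>
    rw [riseFac_succ, show 2 * (n + 1) + 1 = (2 * n + 1) + 1 + 1 by ring, Nat.factorial_succ n,
      Nat.factorial_succ (2 * n + 1 + 1), Nat.factorial_succ (2 * n + 1)]
    push_cast
    rw [← ih]
    ring

lemma term_eq (n : ℕ) : ((9 * (n : ℝ) + 7) / (((n : ℝ) + 1) * (3 * (n : ℝ) + 1))) *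
    (riseFac (5 / 3) n / riseFac (3 / 2) n) * (1 / 4 : ℝ) ^ n = 2 * wzG n 0 := by
  have h := riseFac_pos (x := 3 / 2) (by norm_num) n
  have hf : (0 : ℝ) < n.factorial := by exact_mod_cast n.factorial_pos
  unfold wzG wzF
  simp only [zero_add, Nat.cast_zero]
  rw [← riseFac_three_halves, one_div, inv_pow]
  have h3 : (n : ℝ) * 3 + 1 ≠ 0 := by positivity
  generalize riseFac (5 / 3) n = c
  field_simp
  ring

/-! ### The elementary sum -/

lemma integral_eq : ∫ t in (0 : ℝ)..1, (1 + t) / (1 + t + t ^ 2) =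
    Real.pi * Real.sqrt 3 / 18 + Real.log 3 / 2 := by
  have hs : Real.sqrt 3 ^ 2 = 3 := Real.sq_sqrt (by norm_num)
  have hs0 : 0 < Real.sqrt 3 := by positivity
  have hq : ∀ t : ℝ, 0 < 1 + t + t ^ 2 := fun t => by nlinarith [sq_nonneg (t + 1 / 2)]
  have hd : ∀ t : ℝ, HasDerivAt (fun t => Real.log (1 + t + t ^ 2) / 2 +
      Real.arctan ((2 * t + 1) / Real.sqrt 3) / Real.sqrt 3)
      ((1 + t) / (1 + t + t ^ 2)) t := fun t => by
    have h1 : HasDerivAt (fun t : ℝ => 1 + t + t ^ 2) (1 + 2 * t) t :=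
      (((hasDerivAt_id' t).const_add 1).add (hasDerivAt_pow 2 t)).congr_deriv (by simp)
    have h2 : HasDerivAt (fun t : ℝ => (2 * t + 1) / Real.sqrt 3) (2 / Real.sqrt 3) t := by
      simpa using (((hasDerivAt_id t).const_mul 2).add_const 1).div_const (Real.sqrt 3)
    refine (((h1.log (hq t).ne').div_const 2).add
      (h2.arctan.div_const (Real.sqrt 3))).congr_deriv ?_
    have e : 1 + ((2 * t + 1) / Real.sqrt 3) ^ 2 = 4 / 3 * (1 + t + t ^ 2) := by
      rw [div_pow, hs]; ring
    rw [e]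
    have := (hq t).ne'
    field_simp
    rw [hs]
    ring
  rw [intervalIntegral.integral_eq_sub_of_hasDerivAt (fun t _ => hd t)]
  · have e1 : (2 * 1 + 1) / Real.sqrt 3 = Real.sqrt 3 := by
      rw [div_eq_iff hs0.ne']; nlinarith
    have e0 : (2 * 0 + 1) / Real.sqrt 3 = (Real.sqrt 3)⁻¹ := by
      rw [mul_zero, zero_add, one_div]
    rw [e1, e0, Real.arctan_sqrt_three, Real.arctan_inv_sqrt_three]
    norm_num
    field_simp
    linear_combination (-36 * Real.pi) * hs
  · exact (Continuous.div (by fun_prop) (by fun_prop) fun t => (hq t).ne').intervalIntegrable _ _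

/-- The remainder is explicit because `wzF 0 k = (9/2) ∫ (1 - t²) t^(3k)` over `[0, 1]` and
`(1 - t²) ∑_{k<K} t^(3k) = (1 + t) / (1 + t + t²) (1 - t^(3K))`. -/
lemma partial_sum (K : ℕ) : ∑ k ∈ Finset.range K, wzF 0 k =
    9 / 2 * (∫ t in (0 : ℝ)..1, (1 + t) / (1 + t + t ^ 2)) -
      9 / 2 * ∫ t in (0 : ℝ)..1, (1 + t) / (1 + t + t ^ 2) * t ^ (3 * K) := by
  have hq : ∀ t : ℝ, 1 + t + t ^ 2 ≠ 0 := fun t => by nlinarith [sq_nonneg (t + 1 / 2)]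
  have hc : Continuous fun t : ℝ => (1 + t) / (1 + t + t ^ 2) :=
    Continuous.div (by fun_prop) (by fun_prop) hq
  have hi : ∀ K : ℕ, IntervalIntegrable
      (fun t : ℝ => (1 + t) / (1 + t + t ^ 2) * t ^ (3 * K)) MeasureTheory.volume 0 1 :=
    fun K => (hc.mul (by fun_prop)).intervalIntegrable _ _
  induction K with
  | zero => simp
  | succ K ih =>
    have key : (∫ t in (0 : ℝ)..1, (1 + t) / (1 + t + t ^ 2) * t ^ (3 * K)) -
        (∫ t in (0 : ℝ)..1, (1 + t) / (1 + t + t ^ 2) * t ^ (3 * (K + 1))) =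
        1 / (3 * (K : ℝ) + 1) - 1 / (3 * K + 3) := by
      rw [← intervalIntegral.integral_sub (hi K) (hi (K + 1))]
      have e : ∀ t : ℝ, (1 + t) / (1 + t + t ^ 2) * t ^ (3 * K) -
          (1 + t) / (1 + t + t ^ 2) * t ^ (3 * (K + 1)) = t ^ (3 * K) - t ^ (3 * K + 2) := by
        intro t
        have := hq t
        field_simp
        ring
      simp only [e]
      rw [intervalIntegral.integral_sub ((by fun_prop : Continuous _).intervalIntegrable _ _)
        ((by fun_prop : Continuous _).intervalIntegrable _ _), integral_pow, integral_pow]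
      push_cast
      norm_num
      ring
    rw [Finset.sum_range_succ, ih, wzF_zero]
    have e2 : 3 / (((K : ℝ) + 1) * (3 * K + 1)) =
        9 / 2 * (1 / (3 * K + 1) - 1 / (3 * K + 3)) := by
      rw [show (3 * K + 3 : ℝ) = 3 * (K + 1) by ring]
      field_simp
      ring
    rw [e2, ← key]
    ring

lemma hasSum_row_zero :
    HasSum (wzF 0) (3 * (Real.pi * Real.sqrt 3 / 12 + (3 / 4) * Real.log 3)) := by
  rw [hasSum_iff_tendsto_nat_of_nonneg fun k => (wzF_pos 0 k).le]
  have hrem : Tendsto (fun K : ℕ => ∫ t in (0 : ℝ)..1, (1 + t) / (1 + t + t ^ 2) * t ^ (3 * K))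
      atTop (𝓝 0) := by
    have hq : ∀ t : ℝ, 0 < 1 + t + t ^ 2 := fun t => by nlinarith [sq_nonneg (t + 1 / 2)]
    have hc : Continuous fun t : ℝ => (1 + t) / (1 + t + t ^ 2) :=
      Continuous.div (by fun_prop) (by fun_prop) fun t => (hq t).ne'
    refine squeeze_zero (g := fun K : ℕ => 1 / ((K : ℝ) + 1)) (fun K => ?_) (fun K => ?_)
      tendsto_one_div_add_atTop_nhds_zero_nat
    · refine intervalIntegral.integral_nonneg (by norm_num) fun t ht => ?_
      have := hq t
      have := ht.1
      positivity
    · calc ∫ t in (0 : ℝ)..1, (1 + t) / (1 + t + t ^ 2) * t ^ (3 * K)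
          ≤ ∫ t in (0 : ℝ)..1, t ^ (3 * K) := by
            refine intervalIntegral.integral_mono_on (by norm_num)
              ((hc.mul (by fun_prop)).intervalIntegrable _ _)
              ((by fun_prop : Continuous _).intervalIntegrable _ _) fun t ht => ?_
            refine mul_le_of_le_one_left (pow_nonneg ht.1 _) ?_
            rw [div_le_one (hq t)]
            nlinarith [sq_nonneg t]
        _ = 1 / (3 * K + 1) := by rw [integral_pow]; simp
        _ ≤ 1 / ((K : ℝ) + 1) := by
            have hK : (0 : ℝ) ≤ K := K.cast_nonneg
            exact one_div_le_one_div_of_le (by positivity) (by linarith)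
  simp only [partial_sum, integral_eq]
  convert (hrem.const_mul (9 / 2)).const_sub _ using 2
  ring

/-! ### Telescoping over the rows -/

lemma summable_row (n : ℕ) : Summable (wzF n) :=
  Summable.of_nonneg_of_le (fun k => (wzF_pos n k).le) (wzF_le n)
    (hasSum_row_zero.summable.mul_left _)

lemma row_sub (n : ℕ) : (∑' k, wzF n k) - ∑' k, wzF (n + 1) k = wzG n 0 := by
  have h1 := ((summable_row (n + 1)).hasSum.sub (summable_row n).hasSum).tendsto_sum_nat
  simp only [wzF_sub, Finset.sum_range_sub] at h1
  have h2 := (tendsto_wzG n).sub_const (wzG n 0)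
  linarith [tendsto_nhds_unique h1 h2]

lemma tendsto_row : Tendsto (fun n => ∑' k, wzF n k) atTop (𝓝 0) := by
  refine squeeze_zero (g := fun n => (2 / 3 : ℝ) ^ n * ∑' k, wzF 0 k)
    (fun n => tsum_nonneg fun k => (wzF_pos n k).le) (fun n => ?_) ?_
  · rw [← tsum_mul_left]
    exact (summable_row n).tsum_le_tsum (wzF_le n) ((summable_row 0).mul_left _)
  · simpa using (tendsto_pow_atTop_nhds_zero_of_lt_one (r := (2 / 3 : ℝ)) (by norm_num)
      (by norm_num)).mul_const (∑' k, wzF 0 k)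

lemma hasSum_wzG : HasSum (fun n => wzG n 0) (∑' k, wzF 0 k) := by
  rw [hasSum_iff_tendsto_nat_of_nonneg]
  · simp only [← row_sub, Finset.sum_range_sub']
    simpa using tendsto_row.const_sub (∑' k, wzF 0 k)
  · intro n
    have := wzF_pos n 0
    unfold wzG
    positivity

theorem series_6S0 :
    ∑' n : ℕ, ((9 * (n : ℝ) + 7) / (((n : ℝ) + 1) * (3 * (n : ℝ) + 1))) *
        (riseFac (5 / 3) n / riseFac (3 / 2) n) * (1 / 4 : ℝ) ^ n =
      6 * (Real.pi * Real.sqrt 3 / 12 + (3 / 4) * Real.log 3) := by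
  simp only [term_eq]
  rw [tsum_mul_left, hasSum_wzG.tsum_eq, hasSum_row_zero.tsum_eq]
  ring
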